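/- The theory of the free pseudoplane is complete. Precisely, in the first-order language with a single binary relation symbol I, let T be the theory consisting of: (1) the sentences asserting that I is symmetric and irreflexive; (2) for each natural number n, the sentence asserting that every element has at least n distinct I-neighbors; and (3) for each n ≥ 3, the sentence asserting that there do not exist a₀, a₁, …, aₙ with I(aᵢ, aᵢ₊₁) for all i < n, with a₀, …, a_{n−1} pairwise distinct and aₙ = a₀. Then T is a complete theory: T is satisfiable, and for every sentence φ of the language, either φ ∈ T's consequences or ¬φ ∈ T's consequences. -/

import Mathlib

open FirstOrder FirstOrder.Language

/-- Existentially quantify the last `k` bound variables of a bounded formula. -/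
def FirstOrder.Language.BoundedFormula.exsN {L : Language} {α : Type*} {m : ℕ} :
    ∀ {k : ℕ}, L.BoundedFormula α (m + k) → L.BoundedFormula α m
  | 0, φ => φ
  | k + 1, φ => BoundedFormula.exsN (k := k) φ.ex

/-- The conjunction of a list of bounded formulas. -/
def FirstOrder.Language.BoundedFormula.listAnd {L : Language} {α : Type*} {m : ℕ}
    (l : List (L.BoundedFormula α m)) : L.BoundedFormula α m :=
  l.foldr (· ⊓ ·) ⊤

namespace FreePseudoplane

/-- The variable `x` (the element whose neighbors we count). -/
def xVar (n : ℕ) : Language.graph.Term (Empty ⊕ Fin (1 + n)) :=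
  Term.var (Sum.inr ⟨0, by omega⟩)

/-- The variable `yᵢ` (the `i`-th neighbor). -/
def yVar {n : ℕ} (i : Fin n) : Language.graph.Term (Empty ⊕ Fin (1 + n)) :=
  Term.var (Sum.inr ⟨1 + (i : ℕ), by omega⟩)

/-- The sentence `∀ x, ∃ y₀ … y_{n-1}` pairwise distinct with `I(x, yᵢ)` for each `i`:
every element has at least `n` distinct `I`-neighbors. -/
def atLeastNeighbors (n : ℕ) : Language.graph.Sentence :=
  (BoundedFormula.exsN (m := 1) (k := n)
    (BoundedFormula.listAnd
      (((List.finRange n).map fun i => adj.boundedFormula₂ (xVar n) (yVar i)) ++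
        ((List.finRange n).flatMap fun i => (List.finRange n).map fun j =>
          if i = j then ⊤ else ∼(Term.bdEqual (yVar i) (yVar j)))))).all

/-- The sentence asserting there is no loop of length `n`: there do not exist
`a₀, a₁, …, aₙ` with `I(aᵢ, aᵢ₊₁)` for all `i < n`, with `a₀, …, a_{n-1}` pairwise
distinct and `aₙ = a₀`. -/
def noLoop (n : ℕ) : Language.graph.Sentence :=
  ∼(BoundedFormula.exs
    (BoundedFormula.listAnd
      ((((List.finRange n).map fun i : Fin n =>
          adj.boundedFormula₂ (Term.var (Sum.inr i.castSucc)) (Term.var (Sum.inr i.succ))) ++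
        ((List.finRange n).flatMap fun i => (List.finRange n).map fun j =>
          if i = j then (⊤ : Language.graph.BoundedFormula Empty (n + 1))
          else ∼(Term.bdEqual (Term.var (Sum.inr i.castSucc)) (Term.var (Sum.inr j.castSucc))))) ++
        [Term.bdEqual (Term.var (Sum.inr (Fin.last n)))
          (Term.var (Sum.inr (0 : Fin (n + 1))))])))

/-- The theory of the free pseudoplane (the infinite forest): `I` is symmetric and
irreflexive, every element has at least `n` distinct `I`-neighbors for every `n`, and
there are no loops of length `n` for any `n ≥ 3`. -/
def theory : Language.graph.Theory :=
  Theory.simpleGraph ∪ {φ | ∃ n : ℕ, φ = atLeastNeighbors n} ∪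
    {φ | ∃ n : ℕ, 3 ≤ n ∧ φ = noLoop n}

end FreePseudoplane

/-!
The models are the forests in which every vertex has infinitely many neighbors, and any two of them
are elementarily equivalent by an Ehrenfeucht–Fraïssé game. With `k` rounds to go, Duplicator keeps
a finite partial isomorphism such that any two matched vertices at distance at most `2 ^ k`, in
either graph, are joined by a path of matched vertices. Suppose Spoiler plays a vertex `c`. If `c`
is within `2 ^ (k - 1)` of a matched vertex, the path leading to `c` is matched one vertex after the
other, each with a fresh neighbor of the previous image, which costs at most one unit of the radius
`2 ^ k` per vertex. By acyclicity a new vertex is adjacent to at most one old vertex: two old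
neighbors are at distance two, hence already joined by a matched path, which would close a cycle.
If `c` is far from every matched vertex, it is answered by a vertex with the same property, found
along a long path. The tree of finite sequences of natural numbers is a model.
-/

namespace FreePseudoplane

section BackAndForth

variable {L : Language} {M N : Type*} [L.Structure M] [L.Structure N]

/-- The maximal nesting depth of quantifiers in a formula, which bounds the number of rounds of the
Ehrenfeucht–Fraïssé game needed to decide it. -/
def quantifierRank {α : Type*} : ∀ {n : ℕ}, L.BoundedFormula α n → ℕ
  | _, .falsum => 0
  | _, .equal _ _ => 0
  | _, .rel _ _ => 0
  | _, .imp φ ψ => max (quantifierRank φ) (quantifierRank ψ)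
  | _, .all φ => quantifierRank φ + 1

variable (L) in
/-- A back-and-forth system in the sense of Fraïssé: `I k` is a collection of correspondences
between `M` and `N`, given as sets of pairs, that preserve atomic formulas and can be extended
`k` more times by an arbitrary element on either side. -/
structure IsBackAndForthSystem (I : ℕ → Set (Set (M × N))) : Prop where
  realize_iff_of_isAtomic {k : ℕ} {S : Set (M × N)} (hS : S ∈ I k) {n : ℕ}
    {φ : L.BoundedFormula Empty n} (hφ : φ.IsAtomic) {v : Fin n → M} {w : Fin n → N}
    (hvw : ∀ i, (v i, w i) ∈ S) : φ.Realize default v ↔ φ.Realize default w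
  forth {k : ℕ} {S : Set (M × N)} (hS : S ∈ I (k + 1)) (c : M) :
    ∃ S' ∈ I k, S ⊆ S' ∧ ∃ d, (c, d) ∈ S'
  back {k : ℕ} {S : Set (M × N)} (hS : S ∈ I (k + 1)) (d : N) :
    ∃ S' ∈ I k, S ⊆ S' ∧ ∃ c, (c, d) ∈ S'

lemma mem_snoc_snoc {n : ℕ} {v : Fin n → M} {w : Fin n → N} {S S' : Set (M × N)} {c : M} {d : N}
    (hvw : ∀ i, (v i, w i) ∈ S) (hSS' : S ⊆ S') (hcd : (c, d) ∈ S') (i : Fin (n + 1)) :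
    ((Fin.snoc v c : Fin (n + 1) → M) i, (Fin.snoc w d : Fin (n + 1) → N) i) ∈ S' := by
  induction i using Fin.lastCases with
  | last => simpa using hcd
  | cast i => simpa using hSS' (hvw i)

theorem IsBackAndForthSystem.realize_iff {I : ℕ → Set (Set (M × N))}
    (hI : IsBackAndForthSystem L I) {n : ℕ} {φ : L.BoundedFormula Empty n} {k : ℕ}
    (hk : quantifierRank φ ≤ k) {S : Set (M × N)} (hS : S ∈ I k) {v : Fin n → M} {w : Fin n → N}
    (hvw : ∀ i, (v i, w i) ∈ S) : φ.Realize default v ↔ φ.Realize default w := by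
  induction φ generalizing k S with
  | falsum => rfl
  | equal t₁ t₂ => exact hI.realize_iff_of_isAtomic hS (.equal t₁ t₂) hvw
  | rel R ts => exact hI.realize_iff_of_isAtomic hS (.rel R ts) hvw
  | imp φ ψ ihφ ihψ =>
    obtain ⟨hφ, hψ⟩ := max_le_iff.1 hk
    exact imp_congr (ihφ hφ hS hvw) (ihψ hψ hS hvw)
  | all φ ih =>
    obtain ⟨k, rfl⟩ := Nat.exists_eq_add_of_le' (le_of_add_le_right hk)
    have hφ : quantifierRank φ ≤ k := Nat.le_of_succ_le_succ hk
    simp only [BoundedFormula.realize_all]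
    constructor
    · intro hv d
      obtain ⟨S', hS', hSS', c, hcd⟩ := hI.back hS d
      exact (ih hφ hS' (mem_snoc_snoc hvw hSS' hcd)).1 (hv c)
    · intro hw c
      obtain ⟨S', hS', hSS', d, hcd⟩ := hI.forth hS c
      exact (ih hφ hS' (mem_snoc_snoc hvw hSS' hcd)).2 (hw d)

theorem IsBackAndForthSystem.elementarilyEquivalent {I : ℕ → Set (Set (M × N))}
    (hI : IsBackAndForthSystem L I) (hne : ∀ k, (I k).Nonempty) : M ≅[L] N := by
  refine elementarilyEquivalent_iff.2 fun φ ↦ ?_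
  obtain ⟨S, hS⟩ := hne (quantifierRank φ)
  exact hI.realize_iff (v := default) (w := default) le_rfl hS fun i ↦ i.elim0

end BackAndForth

lemma exists_term_eq_var {L : Language} [L.IsRelational] {α : Type*} (t : L.Term α) :
    ∃ a, t = Term.var a := by
  cases t with
  | var a => exact ⟨a, rfl⟩
  | func f _ => exact isEmptyElim f

lemma realize_iff_of_isAtomic_graph {M N : Type*} [Language.graph.Structure M]
    [Language.graph.Structure N] {n : ℕ} {φ : Language.graph.BoundedFormula Empty n}
    (hφ : φ.IsAtomic) {v : Fin n → M} {w : Fin n → N} (heq : ∀ i j, v i = v j ↔ w i = w j)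
    (hadj : ∀ i j, Structure.RelMap adj ![v i, v j] ↔ Structure.RelMap adj ![w i, w j]) :
    φ.Realize default v ↔ φ.Realize default w := by
  cases hφ with
  | equal t₁ t₂ =>
    obtain ⟨e | i, rfl⟩ := exists_term_eq_var t₁
    · exact e.elim
    obtain ⟨e | j, rfl⟩ := exists_term_eq_var t₂
    · exact e.elim
    exact heq i j
  | rel R ts =>
    cases R
    obtain ⟨e | i, hi⟩ := exists_term_eq_var (ts 0)
    · exact e.elim
    obtain ⟨e | j, hj⟩ := exists_term_eq_var (ts 1)
    · exact e.elim
    have hts : adj.boundedFormula ts = adj.boundedFormula₂ (&i) (&j) :=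
      congrArg adj.boundedFormula (funext (Fin.forall_fin_two.2 ⟨hi, hj⟩))
    simpa only [hts, BoundedFormula.realize_rel₂, Function.comp_apply, Term.realize_var,
      Sum.elim_inr] using hadj i j

section Forest

open SimpleGraph

variable {V W : Type*} {G : SimpleGraph V} {H : SimpleGraph W}

lemma edist_eq_length_of_isPath (hG : G.IsAcyclic) {x y : V} {p : G.Walk x y} (hp : p.IsPath) :
    G.edist x y = p.length := by
  obtain ⟨q, hq, hlen⟩ := p.reachable.exists_path_of_dist
  have hpq : p = q := congrArg Subtype.val ((hG.subsingleton_path x y).elim ⟨p, hp⟩ ⟨q, hq⟩)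
  rw [← p.reachable.coe_dist_eq_edist, ← hlen, hpq]

lemma exists_isPath_length_eq (hG : ∀ x, (G.neighborSet x).Infinite) (x : V) (n : ℕ) :
    ∃ y, ∃ p : G.Walk x y, p.IsPath ∧ p.length = n := by
  classical
  induction n with
  | zero => exact ⟨x, .nil, by simp, rfl⟩
  | succ n ih =>
    obtain ⟨y, p, hp, hlen⟩ := ih
    obtain ⟨z, hyz, hz⟩ := (hG y).exists_notMem_finset p.support.toFinset
    replace hyz : G.Adj y z := hyz
    exact ⟨z, p.concat hyz, hp.concat (by simpa using hz) hyz, by simp [hlen]⟩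

/-- A graph is a free pseudoplane when it is a forest in which every vertex has infinitely many
neighbors. -/
structure IsFreePseudoplane (G : SimpleGraph V) : Prop where
  isAcyclic : G.IsAcyclic
  infinite_neighborSet (x : V) : (G.neighborSet x).Infinite

lemma IsFreePseudoplane.exists_forall_lt_edist [Nonempty V] (hG : IsFreePseudoplane G) {B : Set V}
    (hB : B.Finite) (r : ℕ) :
    ∃ d, ∀ b ∈ B, r < G.edist b d := by
  rcases B.eq_empty_or_nonempty with rfl | ⟨a, -⟩
  · simp
  obtain ⟨M, hM⟩ := (hB.image (G.dist a)).bddAbove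
  obtain ⟨d, p, hp, hlen⟩ := exists_isPath_length_eq hG.infinite_neighborSet a (M + r + 1)
  refine ⟨d, fun b hb ↦ lt_of_not_ge fun hbd ↦ ?_⟩
  have had : G.edist a d = (M + r + 1 : ℕ) := hlen ▸ edist_eq_length_of_isPath hG.isAcyclic hp
  have hab : G.Reachable a b :=
    p.reachable.trans (reachable_of_edist_ne_top (ne_top_of_le_ne_top (by simp) hbd)).symm
  have hle : G.edist a b ≤ M :=
    hab.coe_dist_eq_edist ▸ Nat.cast_le.2 (hM (Set.mem_image_of_mem _ hb))
  have : ((M + r + 1 : ℕ) : ℕ∞) ≤ (M + r : ℕ) := calc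
    _ = G.edist a d := had.symm
    _ ≤ G.edist a b + G.edist b d := G.edist_triangle
    _ ≤ (M + r : ℕ) := by push_cast; gcongr
  exact absurd (Nat.cast_le.1 this) (by omega)

lemma eq_of_adj_of_reachable_deleteEdges (hG : G.IsAcyclic) {c x y : V}
    (hx : G.Adj c x) (hy : G.Adj c y) (h : (G.deleteEdges {s(c, x)}).Reachable x y) : x = y := by
  by_contra hne
  have hcy : (G.deleteEdges {s(c, x)}).Adj c y := by
    simp [deleteEdges_adj, hy, Ne.symm hne, hx.ne]
  exact isBridge_iff.1 (isAcyclic_iff_forall_adj_isBridge.1 hG hx) (hcy.reachable.trans h.symm)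

lemma deleteEdges_adj_of_ne {c x y z : V} (hyz : G.Adj y z) (hy : y ≠ c) (hz : z ≠ c) :
    (G.deleteEdges {s(c, x)}).Adj y z := by
  refine deleteEdges_adj.2 ⟨hyz, fun hmem ↦ ?_⟩
  have hc : c ∈ s(y, z) := Set.mem_singleton_iff.1 hmem ▸ Sym2.mem_mk_left c x
  rcases Sym2.mem_iff.1 hc with rfl | rfl
  · exact hy rfl
  · exact hz rfl

lemma edist_le_succ_of_adj {x y z : V} {r : ℕ} (hxy : G.Adj x y) (hyz : G.edist y z ≤ r) :
    G.edist x z ≤ (r + 1 : ℕ) := calc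
  G.edist x z ≤ G.edist x y + G.edist y z := G.edist_triangle
  _ ≤ 1 + r := add_le_add (edist_eq_one_iff_adj.2 hxy).le hyz
  _ = (r + 1 : ℕ) := by push_cast; exact add_comm _ _

lemma ne_and_not_adj_of_lt_edist {x y : V} {r : ℕ} (hr : 1 ≤ r) (hxy : r < G.edist x y) :
    x ≠ y ∧ ¬G.Adj x y := by
  have : 1 < G.edist x y := (Nat.one_le_cast.2 hr).trans_lt hxy
  rwa [← not_le, edist_le_one_iff_adj_or_eq, not_or, and_comm] at this

/-- The graph whose edges are the pairs of matched edges: `p` and `q` in `S` are adjacent when both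
their components are. -/
def commonGraph (G : SimpleGraph V) (H : SimpleGraph W) (S : Set (V × W)) :
    SimpleGraph (V × W) where
  Adj p q := p ∈ S ∧ q ∈ S ∧ G.Adj p.1 q.1 ∧ H.Adj p.2 q.2
  symm := ⟨fun _ _ h ↦ ⟨h.2.1, h.1, h.2.2.1.symm, h.2.2.2.symm⟩⟩
  loopless := ⟨fun _ h ↦ h.2.2.1.ne rfl⟩

lemma commonGraph_mono {S T : Set (V × W)} (h : S ⊆ T) : commonGraph G H S ≤ commonGraph G H T :=
  fun _ _ hpq ↦ ⟨h hpq.1, h hpq.2.1, hpq.2.2⟩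

lemma reachable_commonGraph_swap {S : Set (V × W)} {p q : V × W}
    (h : (commonGraph G H S).Reachable p q) :
    (commonGraph H G (Prod.swap ⁻¹' S)).Reachable p.swap q.swap :=
  h.map (G := commonGraph G H S) (G' := commonGraph H G (Prod.swap ⁻¹' S))
    ⟨Prod.swap, fun hpq ↦ ⟨hpq.1, hpq.2.1, hpq.2.2.2, hpq.2.2.1⟩⟩

lemma reachable_deleteEdges_of_reachable_commonGraph {S : Set (V × W)} {p q : V × W}
    (h : (commonGraph G H S).Reachable p q) {c : V} (hc : ∀ s ∈ S, s.1 ≠ c) (x : V) :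
    (G.deleteEdges {s(c, x)}).Reachable p.1 q.1 :=
  h.map (G := commonGraph G H S) (G' := G.deleteEdges {s(c, x)})
    ⟨Prod.fst, fun {s t} hst ↦
      deleteEdges_adj_of_ne hst.2.2.1 (hc s hst.1) (hc t hst.2.1)⟩

/-- `S` is the graph of a finite partial isomorphism between `G` and `H` that is `r`-convex: any two
of its points at distance at most `r` on either side are joined by a path inside `S`. -/
structure IsConvexPartialIso (G : SimpleGraph V) (H : SimpleGraph W) (r : ℕ)
    (S : Set (V × W)) : Prop where
  finite : S.Finite
  eq_iff {p q : V × W} (hp : p ∈ S) (hq : q ∈ S) : p.1 = q.1 ↔ p.2 = q.2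
  adj_iff {p q : V × W} (hp : p ∈ S) (hq : q ∈ S) : G.Adj p.1 q.1 ↔ H.Adj p.2 q.2
  reachable_of_edist_fst_le {p q : V × W} (hp : p ∈ S) (hq : q ∈ S) (hpq : G.edist p.1 q.1 ≤ r) :
    (commonGraph G H S).Reachable p q
  reachable_of_edist_snd_le {p q : V × W} (hp : p ∈ S) (hq : q ∈ S) (hpq : H.edist p.2 q.2 ≤ r) :
    (commonGraph G H S).Reachable p q

namespace IsConvexPartialIso

variable {r : ℕ} {S : Set (V × W)}

lemma empty : IsConvexPartialIso G H r ∅ := by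
  constructor <;> simp

lemma anti {r' : ℕ} (h : IsConvexPartialIso G H r S) (hr : r' ≤ r) :
    IsConvexPartialIso G H r' S where
  finite := h.finite
  eq_iff := h.eq_iff
  adj_iff := h.adj_iff
  reachable_of_edist_fst_le hp hq hpq :=
    h.reachable_of_edist_fst_le hp hq (hpq.trans (Nat.cast_le.2 hr))
  reachable_of_edist_snd_le hp hq hpq :=
    h.reachable_of_edist_snd_le hp hq (hpq.trans (Nat.cast_le.2 hr))

lemma swap (h : IsConvexPartialIso G H r S) : IsConvexPartialIso H G r (Prod.swap ⁻¹' S) where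
  finite := h.finite.preimage Prod.swap_injective.injOn
  eq_iff hp hq := (h.eq_iff hp hq).symm
  adj_iff hp hq := (h.adj_iff hp hq).symm
  reachable_of_edist_fst_le hp hq hpq :=
    reachable_commonGraph_swap (h.reachable_of_edist_snd_le hp hq hpq)
  reachable_of_edist_snd_le hp hq hpq :=
    reachable_commonGraph_swap (h.reachable_of_edist_fst_le hp hq hpq)

protected lemma insert (h : IsConvexPartialIso G H r S) {c : V} {d : W}
    (hc : ∀ q ∈ S, q.1 ≠ c) (hd : ∀ q ∈ S, q.2 ≠ d)
    (hadj : ∀ q ∈ S, (G.Adj c q.1 ↔ H.Adj d q.2))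
    (hfst : ∀ q ∈ S, G.edist c q.1 ≤ r → (commonGraph G H (insert (c, d) S)).Reachable (c, d) q)
    (hsnd : ∀ q ∈ S, H.edist d q.2 ≤ r → (commonGraph G H (insert (c, d) S)).Reachable (c, d) q) :
    IsConvexPartialIso G H r (insert (c, d) S) where
  finite := h.finite.insert _
  eq_iff := by
    rintro p q (rfl | hp) (rfl | hq)
    · simp
    · simp [(hc q hq).symm, (hd q hq).symm]
    · simp [hc p hp, hd p hp]
    · exact h.eq_iff hp hq
  adj_iff := by
    rintro p q (rfl | hp) (rfl | hq)
    · simp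
    · exact hadj q hq
    · simpa only [adj_comm] using hadj p hp
    · exact h.adj_iff hp hq
  reachable_of_edist_fst_le := by
    rintro p q (rfl | hp) (rfl | hq) hpq
    · rfl
    · exact hfst q hq hpq
    · exact (hfst p hp (edist_comm ▸ hpq)).symm
    · exact (h.reachable_of_edist_fst_le hp hq hpq).mono
        (commonGraph_mono (Set.subset_insert _ S))
  reachable_of_edist_snd_le := by
    rintro p q (rfl | hp) (rfl | hq) hpq
    · rfl
    · exact hsnd q hq hpq
    · exact (hsnd p hp (edist_comm ▸ hpq)).symm
    · exact (h.reachable_of_edist_snd_le hp hq hpq).mono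
        (commonGraph_mono (Set.subset_insert _ S))

lemma eq_of_adj_of_adj (h : IsConvexPartialIso G H r S) (hr : 2 ≤ r) (hG : G.IsAcyclic)
    {p q : V × W} (hp : p ∈ S) (hq : q ∈ S) {c : V} (hc : ∀ s ∈ S, s.1 ≠ c)
    (hcp : G.Adj c p.1) (hcq : G.Adj c q.1) : p = q := by
  have hdist : G.edist p.1 q.1 ≤ r := calc
    G.edist p.1 q.1 ≤ G.edist p.1 c + G.edist c q.1 := G.edist_triangle
    _ = 2 := by rw [edist_eq_one_iff_adj.2 hcp.symm, edist_eq_one_iff_adj.2 hcq, one_add_one_eq_two]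
    _ ≤ r := by exact_mod_cast hr
  have hfst : p.1 = q.1 := eq_of_adj_of_reachable_deleteEdges hG hcp hcq <|
    reachable_deleteEdges_of_reachable_commonGraph (h.reachable_of_edist_fst_le hp hq hdist) hc p.1
  exact Prod.ext hfst ((h.eq_iff hp hq).1 hfst)

lemma insert_of_adj (h : IsConvexPartialIso G H (r + 1) S) (hr : 1 ≤ r) (hG : G.IsAcyclic)
    (hH : H.IsAcyclic) {p : V × W} (hp : p ∈ S) {c : V} {d : W} (hc : ∀ q ∈ S, q.1 ≠ c)
    (hd : ∀ q ∈ S, q.2 ≠ d) (hcp : G.Adj c p.1) (hdp : H.Adj d p.2) :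
    IsConvexPartialIso G H r (insert (c, d) S) := by
  have hSS : S ⊆ insert (c, d) S := Set.subset_insert _ S
  have hlink : (commonGraph G H (insert (c, d) S)).Reachable (c, d) p :=
    Adj.reachable ⟨Set.mem_insert _ S, hSS hp, hcp, hdp⟩
  refine (h.anti r.le_succ).insert hc hd (fun q hq ↦ ⟨fun hcq ↦ ?_, fun hdq ↦ ?_⟩)
    (fun q hq hcq ↦ ?_) fun q hq hdq ↦ ?_
  · exact h.eq_of_adj_of_adj (by omega) hG hp hq hc hcp hcq ▸ hdp
  · have hpq : p.swap = q.swap :=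
      h.swap.eq_of_adj_of_adj (by omega) hH hp hq (fun s hs ↦ hd _ hs) hdp hdq
    exact Prod.swap_injective hpq ▸ hcp
  · refine hlink.trans ((h.reachable_of_edist_fst_le hp hq ?_).mono (commonGraph_mono hSS))
    exact edist_le_succ_of_adj hcp.symm hcq
  · refine hlink.trans ((h.reachable_of_edist_snd_le hp hq ?_).mono (commonGraph_mono hSS))
    exact edist_le_succ_of_adj hdp.symm hdq

lemma exists_extension_of_adj (h : IsConvexPartialIso G H (r + 1) S) (hr : 1 ≤ r)
    (hG : G.IsAcyclic) (hH : IsFreePseudoplane H)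
    {p : V × W} (hp : p ∈ S) {c : V} (hpc : G.Adj p.1 c) :
    ∃ S', IsConvexPartialIso G H r S' ∧ S ⊆ S' ∧ ∃ d, (c, d) ∈ S' := by
  by_cases hcS : ∃ q ∈ S, q.1 = c
  · obtain ⟨q, hq, rfl⟩ := hcS
    exact ⟨S, h.anti r.le_succ, subset_rfl, q.2, hq⟩
  · push Not at hcS
    obtain ⟨d, hpd, hdS⟩ :=
      (hH.infinite_neighborSet p.2).exists_notMem_finite (h.finite.image Prod.snd)
    have hd : ∀ q ∈ S, q.2 ≠ d := fun q hq hqd ↦ hdS ⟨q, hq, hqd⟩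
    exact ⟨insert (c, d) S,
      h.insert_of_adj hr hG hH.isAcyclic hp hcS hd hpc.symm (Adj.symm hpd),
      Set.subset_insert _ S, d, Set.mem_insert _ S⟩

lemma exists_extension_of_walk (hr : 1 ≤ r) (hG : G.IsAcyclic) (hH : IsFreePseudoplane H)
    {a c : V} (w : G.Walk a c)
    (h : IsConvexPartialIso G H (r + w.length) S) {b : W} (hab : (a, b) ∈ S) :
    ∃ S', IsConvexPartialIso G H r S' ∧ S ⊆ S' ∧ ∃ d, (c, d) ∈ S' := by
  induction w generalizing S b with
  | nil => exact ⟨S, h, subset_rfl, b, hab⟩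
  | cons hadj w ih =>
    obtain ⟨S₁, hS₁, hSS₁, b₁, hb₁⟩ :=
      exists_extension_of_adj (r := r + w.length) h (by omega) hG hH hab hadj
    obtain ⟨S₂, hS₂, hS₁S₂, hd⟩ := ih hS₁ hb₁
    exact ⟨S₂, hS₂, hSS₁.trans hS₁S₂, hd⟩

lemma exists_extension_of_forall_lt_edist [Nonempty W] (h : IsConvexPartialIso G H r S)
    (hr : 1 ≤ r) (hH : IsFreePseudoplane H) {c : V}
    (hc : ∀ p ∈ S, r < G.edist p.1 c) :
    ∃ S', IsConvexPartialIso G H r S' ∧ S ⊆ S' ∧ ∃ d, (c, d) ∈ S' := by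
  obtain ⟨d, hd⟩ := hH.exists_forall_lt_edist (h.finite.image Prod.snd) r
  rw [Set.forall_mem_image] at hd
  refine ⟨insert (c, d) S, h.insert (fun q hq ↦ (ne_and_not_adj_of_lt_edist hr (hc q hq)).1)
    (fun q hq ↦ (ne_and_not_adj_of_lt_edist hr (hd hq)).1) (fun q hq ↦ ?_) (fun q hq hcq ↦ ?_)
    fun q hq hdq ↦ ?_, Set.subset_insert _ S, d, Set.mem_insert _ S⟩
  · rw [G.adj_comm, H.adj_comm]
    exact iff_of_false (ne_and_not_adj_of_lt_edist hr (hc q hq)).2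
      (ne_and_not_adj_of_lt_edist hr (hd hq)).2
  · exact absurd (edist_comm ▸ hcq) (hc q hq).not_ge
  · exact absurd (edist_comm ▸ hdq) (hd hq).not_ge

theorem forth [Nonempty W] (hr : 1 ≤ r) (h : IsConvexPartialIso G H (2 * r) S) (hG : G.IsAcyclic)
    (hH : IsFreePseudoplane H) (c : V) :
    ∃ S', IsConvexPartialIso G H r S' ∧ S ⊆ S' ∧ ∃ d, (c, d) ∈ S' := by
  by_cases hc : ∃ p ∈ S, G.edist p.1 c ≤ r
  · obtain ⟨p, hp, hpc⟩ := hc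
    obtain ⟨w, hw⟩ := exists_walk_of_edist_ne_top (ne_top_of_le_ne_top (by simp) hpc)
    have hwr : w.length ≤ r := Nat.cast_le.1 (hw ▸ hpc)
    exact exists_extension_of_walk hr hG hH w (h.anti (by omega)) hp
  · push Not at hc
    exact (h.anti (by omega)).exists_extension_of_forall_lt_edist hr hH hc

theorem back [Nonempty V] (hr : 1 ≤ r) (h : IsConvexPartialIso G H (2 * r) S)
    (hG : IsFreePseudoplane G) (hH : H.IsAcyclic) (d : W) :
    ∃ S', IsConvexPartialIso G H r S' ∧ S ⊆ S' ∧ ∃ c, (c, d) ∈ S' := by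
  obtain ⟨S', hS', hSS', c, hcd⟩ := h.swap.forth hr hH hG d
  exact ⟨Prod.swap ⁻¹' S', hS'.swap, fun p hp ↦ hSS' (by simpa using hp), c, hcd⟩

end IsConvexPartialIso

/-- The tree of finite sequences in `α`, rooted at the empty sequence, in which each sequence is
joined to its one-letter extensions. -/
def listTree (α : Type*) : SimpleGraph (List α) :=
  .fromRel fun l l' ↦ ∃ a, l' = a :: l

lemma listTree_adj_cons {α : Type*} (a : α) (l : List α) : (listTree α).Adj l (a :: l) :=
  (fromRel_adj _ _ _).2 ⟨(List.cons_ne_self a l).symm, .inl ⟨a, rfl⟩⟩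

lemma suffix_of_reachable_deleteEdges_listTree {α : Type*} {a : α} {l l₁ l₂ : List α}
    (h : ((listTree α).deleteEdges {s(l, a :: l)}).Reachable l₁ l₂) (h₁ : a :: l <:+ l₁) :
    a :: l <:+ l₂ := by
  rw [reachable_iff_reflTransGen] at h
  induction h with
  | refl => exact h₁
  | @tail l₂ l₃ _ hadj ih =>
    obtain ⟨hadj, hne⟩ := deleteEdges_adj.1 hadj
    obtain ⟨-, ⟨b, rfl⟩ | ⟨b, rfl⟩⟩ := (fromRel_adj _ _ _).1 hadj
    · exact ih.trans (List.suffix_cons b l₂)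
    · refine (List.suffix_cons_iff.1 ih).resolve_left fun heq ↦ hne ?_
      obtain ⟨rfl, rfl⟩ := List.cons_eq_cons.1 heq
      exact Sym2.eq_swap

lemma isAcyclic_listTree (α : Type*) : (listTree α).IsAcyclic := by
  have hbridge (a : α) (l : List α) : (listTree α).IsBridge s(l, a :: l) := fun h ↦ by
    have := suffix_of_reachable_deleteEdges_listTree h.symm List.suffix_rfl
    simpa using this.length_le
  refine isAcyclic_iff_forall_adj_isBridge.2 fun l l' h ↦ ?_
  obtain ⟨-, ⟨a, rfl⟩ | ⟨a, rfl⟩⟩ := (fromRel_adj _ _ _).1 h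
  · exact hbridge a l
  · exact Sym2.eq_swap ▸ hbridge a l'

lemma isFreePseudoplane_listTree (α : Type*) [Infinite α] : IsFreePseudoplane (listTree α) where
  isAcyclic := isAcyclic_listTree α
  infinite_neighborSet l := Set.infinite_of_injective_forall_mem
    (fun _ _ h ↦ (List.cons_eq_cons.1 h).1) fun a ↦ listTree_adj_cons a l

/-- A cyclic sequence `a 0, …, a n = a 0` of successively adjacent vertices, without repetition
among the first `n`. For `n = 2` an edge traversed back and forth qualifies, so only `n ≥ 3` is a
cycle in the graph. -/
structure IsLoop (G : SimpleGraph V) {n : ℕ} (a : Fin (n + 1) → V) : Prop where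
  adj (i : Fin n) : G.Adj (a i.castSucc) (a i.succ)
  injective : Function.Injective (a ∘ Fin.castSucc)
  last_eq_zero : a (Fin.last n) = a 0

lemma isLoop_getVert {v : V} {c : G.Walk v v} (hc : c.IsCycle) :
    IsLoop G fun i : Fin (c.length + 1) ↦ c.getVert i where
  adj i := c.adj_getVert_succ i.2
  injective i j hij :=
    Fin.ext (hc.getVert_injOn' (by simp; omega) (by simp; omega) hij)
  last_eq_zero := by simp

lemma IsLoop.ne {n : ℕ} {a : Fin (n + 1) → V} (ha : IsLoop G a) {i j : ℕ} (hi : i < n) (hj : j < n)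
    (hij : i ≠ j) : a ⟨i, hi.le.trans_lt n.lt_succ_self⟩ ≠ a ⟨j, hj.le.trans_lt n.lt_succ_self⟩ :=
  fun h ↦ hij (Fin.mk.inj_iff.1 (ha.injective (a₁ := ⟨i, hi⟩) (a₂ := ⟨j, hj⟩) h))

lemma IsLoop.reachable_deleteEdges {n : ℕ} {a : Fin (n + 1) → V} (ha : IsLoop G a) (x : V) {i : ℕ}
    (hi : i + 1 < n) :
    (G.deleteEdges {s(a 0, x)}).Reachable (a ⟨1, by omega⟩) (a ⟨i + 1, by omega⟩) := by
  induction i with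
  | zero => rfl
  | succ i ih =>
    have hadj : (G.deleteEdges {s(a 0, x)}).Adj (a ⟨i + 1, by omega⟩) (a ⟨i + 2, by omega⟩) :=
      deleteEdges_adj_of_ne (ha.adj ⟨i + 1, by omega⟩)
        (ha.ne (j := 0) (by omega) (by omega) i.succ_ne_zero)
        (ha.ne (j := 0) hi (by omega) (i + 1).succ_ne_zero)
    exact (ih (by omega)).trans hadj.reachable

lemma not_isLoop_of_isAcyclic (hG : G.IsAcyclic) {n : ℕ} (hn : 3 ≤ n) (a : Fin (n + 1) → V) :
    ¬IsLoop G a := by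
  intro ha
  obtain ⟨m, rfl⟩ := Nat.exists_eq_add_of_le' hn
  have hfirst : G.Adj (a 0) (a ⟨1, by omega⟩) := ha.adj 0
  have hlast : G.Adj (a 0) (a ⟨m + 1 + 1, by omega⟩) :=
    ha.last_eq_zero ▸ (ha.adj (Fin.last (m + 2))).symm
  exact ha.ne (by omega) (by omega) (by omega) (eq_of_adj_of_reachable_deleteEdges hG hfirst hlast
    (ha.reachable_deleteEdges _ (by omega)))

lemma isAcyclic_iff_forall_not_isLoop :
    G.IsAcyclic ↔ ∀ n, 3 ≤ n → ∀ a : Fin (n + 1) → V, ¬IsLoop G a :=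
  ⟨fun hG _ hn ↦ not_isLoop_of_isAcyclic hG hn,
    fun h _ c hc ↦ h c.length hc.three_le_length _ (isLoop_getVert hc)⟩

end Forest

lemma infinite_iff_forall_exists_injective {α : Type*} {s : Set α} :
    s.Infinite ↔ ∀ n, ∃ y : Fin n → α, (∀ i, y i ∈ s) ∧ Function.Injective y := by
  refine ⟨fun hs n ↦ ⟨fun i ↦ hs.natEmbedding s i, fun i ↦ (hs.natEmbedding s i).2,
    Subtype.val_injective.comp ((hs.natEmbedding s).injective.comp Fin.val_injective)⟩, ?_⟩
  intro h hs
  obtain ⟨y, hys, hy⟩ := h (s.ncard + 1)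
  have := Set.ncard_le_ncard (Set.range_subset_iff.2 hys) hs
  rw [Set.ncard_range_of_injective hy, Nat.card_fin] at this
  omega

section Axioms

lemma realize_exsN {L : Language} {M : Type*} [L.Structure M] {α : Type*} {m k : ℕ}
    (φ : L.BoundedFormula α (m + k)) (v : α → M) (xs : Fin m → M) :
    φ.exsN.Realize v xs ↔ ∃ ys : Fin k → M, φ.Realize v (Fin.append xs ys) := by
  induction k with
  | zero => simp [BoundedFormula.exsN, Fin.append_right_nil]
  | succ k ih =>
    simp only [BoundedFormula.exsN, ih, BoundedFormula.realize_ex, ← Fin.append_snoc]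
    exact ⟨fun ⟨ys, a, h⟩ ↦ ⟨Fin.snoc ys a, h⟩,
      fun ⟨ys, h⟩ ↦ ⟨Fin.init ys, ys (Fin.last k), by rwa [Fin.snoc_init_self]⟩⟩

lemma forall_mem_realize_ne_iff_injective {L : Language} {M : Type*} [L.Structure M] {α : Type*}
    {m n : ℕ} (t : Fin n → L.Term (α ⊕ Fin m)) (v : α → M) (xs : Fin m → M) :
    (∀ φ ∈ (List.finRange n).flatMap fun i ↦ (List.finRange n).map fun j ↦
      if i = j then ⊤ else ∼((t i).bdEqual (t j)), φ.Realize v xs) ↔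
      Function.Injective fun i ↦ (t i).realize (Sum.elim v xs) := by
  simp only [List.mem_flatMap, List.mem_map, List.mem_finRange, true_and, forall_exists_index]
  refine ⟨fun h i j hij ↦ ?_, ?_⟩
  · by_contra hne
    have := h _ i j rfl
    rw [if_neg hne] at this
    exact this hij
  · rintro h _ i j rfl
    split_ifs with hij
    · exact BoundedFormula.realize_top.2 trivial
    · exact fun e ↦ hij (h e)

variable {M : Type*} [Language.graph.Structure M] [M ⊨ Theory.simpleGraph]

lemma realize_atLeastNeighbors {n : ℕ} : M ⊨ atLeastNeighbors n ↔
    ∀ x : M, ∃ y : Fin n → M, (∀ i, y i ∈ (simpleGraphOfStructure M).neighborSet x) ∧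
      Function.Injective y := by
  refine forall_congr' fun x ↦ ?_
  rw [realize_exsN]
  refine exists_congr fun y ↦ ?_
  have hx :
      (xVar n).realize (Sum.elim (default : Empty → M) (Fin.append (Fin.snoc default x) y)) = x :=
    Fin.append_left (Fin.snoc default x : Fin 1 → M) y 0
  have hy (i : Fin n) :
      (yVar i).realize (Sum.elim (default : Empty → M) (Fin.append (Fin.snoc default x) y)) = y i :=
    Fin.append_right (Fin.snoc default x : Fin 1 → M) y i
  simp only [BoundedFormula.listAnd, BoundedFormula.realize_foldr_inf, List.forall_mem_append,
    forall_mem_realize_ne_iff_injective, List.forall_mem_map, List.mem_finRange, true_imp_iff,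
    BoundedFormula.realize_rel₂, hx, hy]
  rfl

lemma realize_noLoop {n : ℕ} : M ⊨ noLoop n ↔
    ∀ a : Fin (n + 1) → M, ¬IsLoop (simpleGraphOfStructure M) a := by
  rw [noLoop, Sentence.realize_not, Sentence.Realize, BoundedFormula.realize_exs, ← not_exists]
  refine not_congr (exists_congr fun a ↦ ?_)
  simp only [BoundedFormula.listAnd, BoundedFormula.realize_foldr_inf, List.forall_mem_append,
    forall_mem_realize_ne_iff_injective, List.forall_mem_map, List.mem_finRange, true_imp_iff,
    BoundedFormula.realize_rel₂, List.forall_mem_singleton, BoundedFormula.realize_bdEqual]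
  exact ⟨fun h ↦ ⟨h.1.1, h.1.2, h.2⟩, fun h ↦ ⟨⟨h.adj, h.injective⟩, h.last_eq_zero⟩⟩

theorem model_theory_iff :
    M ⊨ theory ↔ IsFreePseudoplane (simpleGraphOfStructure M) := by
  have hneighbors : M ⊨ {φ | ∃ n, φ = atLeastNeighbors n} ↔
      ∀ x, ((simpleGraphOfStructure M).neighborSet x).Infinite := by
    simp only [infinite_iff_forall_exists_injective, Theory.model_iff, Set.mem_ofPred_eq,
      forall_exists_index, forall_eq_apply_imp_iff, realize_atLeastNeighbors]
    exact forall_comm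
  have hloops : M ⊨ {φ | ∃ n, 3 ≤ n ∧ φ = noLoop n} ↔ (simpleGraphOfStructure M).IsAcyclic := by
    simp only [isAcyclic_iff_forall_not_isLoop, Theory.model_iff, Set.mem_ofPred_eq,
      forall_exists_index, and_imp, ← realize_noLoop]
    exact ⟨fun h n hn ↦ h _ n hn rfl, fun h _ n hn hφ ↦ hφ ▸ h n hn⟩
  rw [theory, Theory.model_union_iff, Theory.model_union_iff, hneighbors, hloops]
  exact ⟨fun h ↦ ⟨h.2, h.1.2⟩, fun h ↦ ⟨⟨inferInstance, h.2⟩, h.1⟩⟩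

end Axioms

instance model_simpleGraph_of_model_theory (M : Type*) [Language.graph.Structure M]
    [h : M ⊨ theory] : M ⊨ Theory.simpleGraph :=
  h.mono fun _ hφ ↦ .inl (.inl hφ)

theorem isBackAndForthSystem_isConvexPartialIso {M N : Type*} [Language.graph.Structure M]
    [Language.graph.Structure N]
    [hM : M ⊨ theory] [hN : N ⊨ theory] [Nonempty M] [Nonempty N] :
    IsBackAndForthSystem Language.graph fun k ↦ {S : Set (M × N) |
      IsConvexPartialIso (simpleGraphOfStructure M) (simpleGraphOfStructure N) (2 ^ k) S} where
  realize_iff_of_isAtomic hS _ _ hφ _ _ hvw := realize_iff_of_isAtomic_graph hφ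
    (fun i j ↦ hS.eq_iff (hvw i) (hvw j)) fun i j ↦ hS.adj_iff (hvw i) (hvw j)
  forth hS := by
    rw [Set.mem_ofPred_eq, pow_succ'] at hS
    exact hS.forth Nat.one_le_two_pow (model_theory_iff.1 hM).isAcyclic (model_theory_iff.1 hN)
  back hS := by
    rw [Set.mem_ofPred_eq, pow_succ'] at hS
    exact hS.back Nat.one_le_two_pow (model_theory_iff.1 hM) (model_theory_iff.1 hN).isAcyclic

theorem elementarilyEquivalent_of_model {M N : Type*} [Language.graph.Structure M]
    [Language.graph.Structure N] [M ⊨ theory] [N ⊨ theory] [Nonempty M] [Nonempty N] :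
    M ≅[Language.graph] N :=
  isBackAndForthSystem_isConvexPartialIso.elementarilyEquivalent fun _ ↦ ⟨∅, .empty⟩

theorem isSatisfiable_theory : theory.IsSatisfiable := by
  let := (listTree ℕ).structure
  have : List ℕ ⊨ theory := by
    rw [model_theory_iff, SimpleGraph.simpleGraphOfStructure]
    exact isFreePseudoplane_listTree ℕ
  exact Theory.Model.isSatisfiable (List ℕ)

end FreePseudoplane

/-- The theory of the free pseudoplane is complete: it is satisfiable, and every
sentence or its negation is a consequence. -/
theorem freePseudoplane_theory_isComplete : FreePseudoplane.theory.IsComplete :=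
  Theory.IsComplete.isComplete_iff_models_elementarily_equivalent.2
    ⟨FreePseudoplane.isSatisfiable_theory, fun _ _ ↦
      FreePseudoplane.elementarilyEquivalent_of_model⟩
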